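/- arXiv:1611.03189 — 7 statements merged into one kernel-verified Lean document; each statement's English description precedes it below -/
import Mathlib

section
/- Let K_ff, E_ff be symmetric n×n real matrices, K_fc, E_fc be n×m real matrices, K_cc a symmetric invertible m×m real matrix, and set K_cf := K_fcᵀ and E_cf := E_fcᵀ. Define A := (K_ff + E_ff) − (K_fc + E_fc)K_cc⁻¹(K_cf + E_cf), A_H := K_ff − K_fc K_cc⁻¹ K_cf, and let ‖E‖_F := (‖E_ff‖_F² + 2‖E_fc‖_F²)^{1/2} be the Frobenius norm of the block perturbation matrix E = [[E_ff, E_fc],[E_cf, 0]]. Then ‖A − A_H‖_F ≤ √(1 + 2‖K_cc⁻¹K_cf‖_F²) · ‖E‖_F + ‖K_cc⁻¹‖_F · ‖E‖_F². -/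
open Matrix

/-- Frobenius norm of a real matrix. -/
noncomputable def frobNorm {m n : ℕ} (M : Matrix (Fin m) (Fin n) ℝ) : ℝ :=
  Real.sqrt (∑ i, ∑ j, M i j ^ 2)

section helpers
attribute [local instance] Matrix.frobeniusNormedAddCommGroup

theorem frobNorm_eq {m n : ℕ} (M : Matrix (Fin m) (Fin n) ℝ) : frobNorm M = ‖M‖ := by
  rw [Matrix.frobenius_norm_def, frobNorm, Real.sqrt_eq_rpow]
  simp

theorem frobNorm_nonneg {m n : ℕ} (M : Matrix (Fin m) (Fin n) ℝ) : 0 ≤ frobNorm M :=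
  Real.sqrt_nonneg _

theorem frobNorm_sub {m n : ℕ} (M N : Matrix (Fin m) (Fin n) ℝ) :
    frobNorm (M - N) ≤ frobNorm M + frobNorm N := by
  simp only [frobNorm_eq]
  exact norm_sub_le _ _

theorem frobNorm_mul {l m n : ℕ} (M : Matrix (Fin l) (Fin m) ℝ) (N : Matrix (Fin m) (Fin n) ℝ) :
    frobNorm (M * N) ≤ frobNorm M * frobNorm N := by
  simp only [frobNorm_eq]
  exact Matrix.frobenius_norm_mul _ _

theorem frobNorm_tr {m n : ℕ} (M : Matrix (Fin m) (Fin n) ℝ) :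
    frobNorm Mᵀ = frobNorm M := by
  simp only [frobNorm_eq]
  exact Matrix.frobenius_norm_transpose _
end helpers

/-- Error estimate for the hierarchical factorization.  With
`A := (K_ff + E_ff) − (K_fc + E_fc)K_cc⁻¹(K_cf + E_cf)`,
`A_H := K_ff − K_fc K_cc⁻¹ K_cf`, `K_cf := K_fcᵀ`, `E_cf := E_fcᵀ`, and
`‖E‖_F := (‖E_ff‖_F² + 2‖E_fc‖_F²)^{1/2}`, one has
`‖A − A_H‖_F ≤ √(1 + 2‖K_cc⁻¹K_cf‖_F²)·‖E‖_F + ‖K_cc⁻¹‖_F·‖E‖_F²`. -/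
theorem hierarchical_factorization_error_estimate {n m : ℕ}
    (Kff Eff : Matrix (Fin n) (Fin n) ℝ)
    (Kfc Efc : Matrix (Fin n) (Fin m) ℝ)
    (Kcc : Matrix (Fin m) (Fin m) ℝ)
    (hKff : Kff.IsSymm) (hEff : Eff.IsSymm) (hKcc : Kcc.IsSymm)
    (hinv : IsUnit Kcc.det)
    (A AH : Matrix (Fin n) (Fin n) ℝ)
    (hA : A = (Kff + Eff) - (Kfc + Efc) * Kcc⁻¹ * (Kfcᵀ + Efcᵀ))
    (hAH : AH = Kff - Kfc * Kcc⁻¹ * Kfcᵀ)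
    (EF : ℝ) (hEF : EF = Real.sqrt (frobNorm Eff ^ 2 + 2 * frobNorm Efc ^ 2)) :
    frobNorm (A - AH) ≤
      Real.sqrt (1 + 2 * frobNorm (Kcc⁻¹ * Kfcᵀ) ^ 2) * EF
        + frobNorm Kcc⁻¹ * EF ^ 2 := by
  have hs : (Kcc⁻¹)ᵀ = Kcc⁻¹ := by rw [Matrix.transpose_nonsing_inv, hKcc.eq]
  have e : A - AH = Eff - Efc * (Kcc⁻¹ * Kfcᵀ) - (Efc * (Kcc⁻¹ * Kfcᵀ))ᵀ
      - Efc * Kcc⁻¹ * Efcᵀ := by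
    rw [hA, hAH]
    simp only [Matrix.transpose_mul, hs, Matrix.transpose_transpose, Matrix.mul_add,
      Matrix.add_mul, Matrix.mul_assoc]
    abel
  have h1 := frobNorm_sub (Eff - Efc * (Kcc⁻¹ * Kfcᵀ) - (Efc * (Kcc⁻¹ * Kfcᵀ))ᵀ)
    (Efc * Kcc⁻¹ * Efcᵀ)
  have h2 := frobNorm_sub (Eff - Efc * (Kcc⁻¹ * Kfcᵀ)) (Efc * (Kcc⁻¹ * Kfcᵀ))ᵀ
  have h3 := frobNorm_sub Eff (Efc * (Kcc⁻¹ * Kfcᵀ))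
  have h4 := frobNorm_mul Efc (Kcc⁻¹ * Kfcᵀ)
  have h5 := frobNorm_mul (Efc * Kcc⁻¹) Efcᵀ
  have h6 := mul_le_mul_of_nonneg_right (frobNorm_mul Efc Kcc⁻¹) (frobNorm_nonneg Efc)
  rw [frobNorm_tr] at h2 h5
  rw [← e] at h1
  have hE2 : EF ^ 2 = frobNorm Eff ^ 2 + 2 * frobNorm Efc ^ 2 := by
    rw [hEF, Real.sq_sqrt (by positivity)]
  have h7 : frobNorm Eff + 2 * (frobNorm Efc * frobNorm (Kcc⁻¹ * Kfcᵀ)) ≤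
      Real.sqrt (1 + 2 * frobNorm (Kcc⁻¹ * Kfcᵀ) ^ 2) * EF := by
    rw [hEF, ← Real.sqrt_mul (by positivity)]
    apply Real.le_sqrt_of_sq_le
    nlinarith [sq_nonneg (frobNorm Eff * frobNorm (Kcc⁻¹ * Kfcᵀ) - frobNorm Efc)]
  have h8 : frobNorm Kcc⁻¹ * frobNorm Efc ^ 2 ≤ frobNorm Kcc⁻¹ * EF ^ 2 := by
    apply mul_le_mul_of_nonneg_left _ (frobNorm_nonneg _)
    rw [hE2]
    nlinarith [sq_nonneg (frobNorm Eff), sq_nonneg (frobNorm Efc)]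
  linarith
end

section
/- Let A be an n×n real symmetric positive definite matrix, μ > 0, and let u, w ∈ ℝⁿ satisfy uᵀAw = 0. Assume wᵀAw ≥ μ‖w‖² and (2u+w)ᵀA(2u+w) ≥ μ‖2u+w‖². Then (u+w)ᵀA(u+w) ≥ (√3/2)·μ·‖w‖·‖2u+w‖. -/
open Matrix

/-- Euclidean norm on ℝⁿ. -/
noncomputable def euclNorm {n : ℕ} (v : Fin n → ℝ) : ℝ := Real.sqrt (∑ i, v i ^ 2)

/-- For an SPD matrix `A`, A-orthogonal vectors `u, w` with
`wᵀAw ≥ μ‖w‖²` and `(2u+w)ᵀA(2u+w) ≥ μ‖2u+w‖²` (`μ > 0`), one has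
`(u+w)ᵀA(u+w) ≥ (√3/2)·μ·‖w‖·‖2u+w‖`. -/
theorem rayleigh_lower_bound_A_orthogonal {n : ℕ}
    (A : Matrix (Fin n) (Fin n) ℝ) (hA : A.PosDef)
    (μ : ℝ) (hμ : 0 < μ) (u w : Fin n → ℝ)
    (horth : u ⬝ᵥ A.mulVec w = 0)
    (hw : μ * euclNorm w ^ 2 ≤ w ⬝ᵥ A.mulVec w)
    (h2uw : μ * euclNorm ((2 : ℝ) • u + w) ^ 2
              ≤ ((2 : ℝ) • u + w) ⬝ᵥ A.mulVec ((2 : ℝ) • u + w)) :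
    Real.sqrt 3 / 2 * μ * euclNorm w * euclNorm ((2 : ℝ) • u + w)
      ≤ (u + w) ⬝ᵥ A.mulVec (u + w) := by
  have hs : w ⬝ᵥ A.mulVec u = 0 := by
    have hT : Aᵀ = A := by
      have h := hA.isHermitian.eq
      rwa [Matrix.conjTranspose_eq_transpose_of_trivial] at h
    rw [Matrix.dotProduct_mulVec, ← Matrix.mulVec_transpose, hT, dotProduct_comm]
    exact horth
  have e1 : (u + w) ⬝ᵥ A.mulVec (u + w) = u ⬝ᵥ A.mulVec u + w ⬝ᵥ A.mulVec w := by
    simp only [Matrix.mulVec_add, add_dotProduct, dotProduct_add, hs, horth]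
    ring
  have e2 : ((2 : ℝ) • u + w) ⬝ᵥ A.mulVec ((2 : ℝ) • u + w)
      = 4 * (u ⬝ᵥ A.mulVec u) + w ⬝ᵥ A.mulVec w := by
    simp only [Matrix.mulVec_add, Matrix.mulVec_smul, add_dotProduct, dotProduct_add,
      smul_dotProduct, dotProduct_smul, hs, horth, smul_eq_mul]
    ring
  rw [e2] at h2uw
  rw [e1]
  generalize euclNorm ((2 : ℝ) • u + w) = y at *
  generalize euclNorm w = x at *
  have h3 : Real.sqrt 3 ^ 2 = 3 := Real.sq_sqrt (by norm_num)
  have key : 0 ≤ μ * (Real.sqrt 3 * x - y) ^ 2 := by positivity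
  have ex : μ * (Real.sqrt 3 * x - y) ^ 2
      = 3 * (μ * x ^ 2) + μ * y ^ 2 - 4 * (Real.sqrt 3 / 2 * μ * x * y) := by
    linear_combination μ * x ^ 2 * h3
  linarith
end

section
/- Let A be an n×n real symmetric positive definite matrix with largest eigenvalue λ_max, and let A_H be an n×n real symmetric matrix. Let S₁,…,S_N be subspaces of ℝⁿ forming an A-orthogonal direct sum of ℝⁿ: every v ∈ ℝⁿ is a sum v = v₁ + … + v_N with vᵢ ∈ Sᵢ, Sᵢ ∩ (Σ_{j≠i} Sⱼ) = {0}, and vᵢᵀAvⱼ = 0 whenever vᵢ ∈ Sᵢ, vⱼ ∈ Sⱼ with i ≠ j. Assume: (i) for each i there is εᵢ ≥ 0 with ‖(A − A_H)v‖ ≤ εᵢ·λ_max·‖v‖ for all v ∈ Sᵢ; (ii) for each i there is μᵢ > 0 with vᵀAv ≥ μᵢ‖v‖² for all v ∈ Pᵢ := Sᵢ + S_{i+1} + … + S_N; (iii) δ := ε_N·λ_max/μ_N + (2/√3)·Σ_{i=1}^{N−1} εᵢ·λ_max/μᵢ < 1. Then for every v ∈ ℝⁿ, (1 − δ)·vᵀAv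 ≤ vᵀA_H v ≤ (1 + δ)·vᵀAv; in particular A_H is symmetric positive definite and every eigenvalue ρ of A_H⁻¹A satisfies 1/(1+δ) ≤ ρ ≤ 1/(1−δ), so κ(A_H⁻¹A) ≤ (1+δ)/(1−δ). -/
open Matrix

/-- Euclidean norm on ℝⁿ. -/
noncomputable def enorm {n : ℕ} (v : Fin n → ℝ) : ℝ := Real.sqrt (∑ i, v i ^ 2)

lemma aux_enorm_sq {n : ℕ} (v : Fin n → ℝ) : _root_.enorm v ^ 2 = ∑ i, v i ^ 2 :=
  Real.sq_sqrt (Finset.sum_nonneg fun _ _ => sq_nonneg _)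

lemma aux_enorm_nonneg {n : ℕ} (v : Fin n → ℝ) : 0 ≤ _root_.enorm v := Real.sqrt_nonneg _

lemma aux_cs {n : ℕ} (v w : Fin n → ℝ) : |v ⬝ᵥ w| ≤ _root_.enorm v * _root_.enorm w := by
  refine abs_le_of_sq_le_sq ?_ (mul_nonneg (aux_enorm_nonneg v) (aux_enorm_nonneg w))
  rw [mul_pow, aux_enorm_sq, aux_enorm_sq]
  exact Finset.sum_mul_sq_le_sq_mul_sq _ _ _

/-- weights -/
def auxT {N : ℕ} (i j : Fin N) : ℝ := if i < j then 2 else if i = j then 1 else 0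

lemma aux_sum {N : ℕ} (f : Fin N → Fin N → ℝ) (hf : ∀ i j, f i j = f j i) :
    ∑ i, ∑ j, f i j = ∑ i, ∑ j, auxT i j * f i j := by
  have h1 : ∑ i, ∑ j, auxT i j * f i j = ∑ i, ∑ j, auxT j i * f i j := by
    rw [Finset.sum_comm]
    refine Finset.sum_congr rfl fun i _ => Finset.sum_congr rfl fun j _ => ?_
    rw [hf]
  have h2 : ∑ i, ∑ j, auxT i j * f i j + ∑ i, ∑ j, auxT j i * f i j
      = 2 * ∑ i, ∑ j, f i j := by
    simp only [Finset.mul_sum, ← Finset.sum_add_distrib]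
    refine Finset.sum_congr rfl fun i _ => Finset.sum_congr rfl fun j _ => ?_
    rw [← add_mul]
    congr 1
    unfold auxT
    rcases lt_trichotomy i j with h | h | h
    · simp [h, h.not_gt, h.ne']
    · subst h; norm_num
    · simp [h, h.not_gt, h.ne']
  linarith

lemma aux_bilin {n M : ℕ} (B : Matrix (Fin n) (Fin n) ℝ) (c d : Fin M → Fin n → ℝ) :
    (∑ i, c i) ⬝ᵥ B.mulVec (∑ j, d j) = ∑ i, ∑ j, c i ⬝ᵥ B.mulVec (d j) := by
  rw [sum_dotProduct]
  refine Finset.sum_congr rfl fun i _ => ?_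
  rw [Matrix.mulVec_sum, dotProduct_sum]

lemma aux_symm {n : ℕ} (B : Matrix (Fin n) (Fin n) ℝ) (hB : B.IsSymm) (v w : Fin n → ℝ) :
    v ⬝ᵥ B.mulVec w = w ⬝ᵥ B.mulVec v := by
  rw [dotProduct_mulVec, ← mulVec_transpose, hB.eq, dotProduct_comm]

lemma aux_diag {n M : ℕ} (A : Matrix (Fin n) (Fin n) ℝ) (c : Fin M → Fin n → ℝ)
    (h : ∀ i j, i ≠ j → c i ⬝ᵥ A.mulVec (c j) = 0) (t : Fin M → ℝ) :
    (∑ i, t i • c i) ⬝ᵥ A.mulVec (∑ i, t i • c i) = ∑ i, t i ^ 2 * (c i ⬝ᵥ A.mulVec (c i)) := by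
  rw [aux_bilin]
  refine Finset.sum_congr rfl fun i _ => ?_
  rw [Finset.sum_eq_single i]
  · simp [mulVec_smul]; ring
  · intro j _ hj
    simp [mulVec_smul, h i j hj.symm]
  · simp

lemma aux_num {x y m a b K Q : ℝ} (hx : 0 ≤ x) (hy : 0 ≤ y) (hm : 0 < m) (hK : 0 ≤ K) (hQ : 0 ≤ Q)
    (ha : m * x ^ 2 ≤ a) (hb : m * y ^ 2 ≤ b) (hab : a * b ≤ (K * Q) ^ 2) :
    x * y ≤ K * Q / m := by
  rw [le_div_iff₀ hm]
  refine abs_le_of_sq_le_sq ?_ (mul_nonneg hK hQ) |> (le_abs_self _).trans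
  calc (x * y * m) ^ 2 = (m * x ^ 2) * (m * y ^ 2) := by ring
    _ ≤ a * b := mul_le_mul ha hb (by positivity) (le_trans (by positivity) ha)
    _ ≤ _ := hab

/-- Theorem on the condition number of the preconditioned system.
Let `A` be SPD with largest eigenvalue `λ_max` and `A_H` symmetric.  Let
`S 0, …, S N` be subspaces of ℝⁿ forming an A-orthogonal direct sum of ℝⁿ.
Assume `‖(A − A_H)v‖ ≤ εᵢ·λ_max·‖v‖` on `Sᵢ`, `vᵀAv ≥ μᵢ‖v‖²` on
`Pᵢ := Sᵢ + … + S N` (`μᵢ > 0`), and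
`δ := ε_N·λ_max/μ_N + (2/√3)·∑_{i<N} εᵢ·λ_max/μᵢ < 1`.  Then
`(1 − δ)·vᵀAv ≤ vᵀA_Hv ≤ (1 + δ)·vᵀAv` for every `v`; in particular `A_H` is SPD,
every eigenvalue `ρ` of `A_H⁻¹A` satisfies `1/(1+δ) ≤ ρ ≤ 1/(1−δ)`, and
`κ(A_H⁻¹A) ≤ (1+δ)/(1−δ)`. -/
theorem condition_number_of_preconditioned_system {n N : ℕ}
    (A AH : Matrix (Fin n) (Fin n) ℝ)
    (hA : A.PosDef) (hAH : AH.IsSymm)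
    (lammax : ℝ)
    (hmaxev : ∃ v : Fin n → ℝ, v ≠ 0 ∧ A.mulVec v = lammax • v)
    (hmaxub : ∀ (lam : ℝ) (v : Fin n → ℝ), v ≠ 0 → A.mulVec v = lam • v → lam ≤ lammax)
    (S : Fin (N + 1) → Submodule ℝ (Fin n → ℝ))
    (hspan : ∀ v : Fin n → ℝ, ∃ c : Fin (N + 1) → Fin n → ℝ,
        (∀ i, c i ∈ S i) ∧ v = ∑ i, c i)
    (hindep : ∀ i, S i ⊓ (⨆ j, ⨆ (_ : j ≠ i), S j) = ⊥)
    (horth : ∀ i j, i ≠ j → ∀ vi ∈ S i, ∀ vj ∈ S j, vi ⬝ᵥ A.mulVec vj = 0)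
    (ε : Fin (N + 1) → ℝ) (hε : ∀ i, 0 ≤ ε i)
    (happrox : ∀ i, ∀ v ∈ S i,
        _root_.enorm ((A - AH).mulVec v) ≤ ε i * lammax * _root_.enorm v)
    (μ : Fin (N + 1) → ℝ) (hμpos : ∀ i, 0 < μ i)
    (hμ : ∀ i, ∀ v ∈ (⨆ j, ⨆ (_ : i ≤ j), S j),
        μ i * _root_.enorm v ^ 2 ≤ v ⬝ᵥ A.mulVec v)
    (δ : ℝ)
    (hδ : δ = ε (Fin.last N) * lammax / μ (Fin.last N)
            + 2 / Real.sqrt 3 * ∑ i : Fin N, ε i.castSucc * lammax / μ i.castSucc)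
    (hδ1 : δ < 1) :
    (∀ v : Fin n → ℝ,
        (1 - δ) * (v ⬝ᵥ A.mulVec v) ≤ v ⬝ᵥ AH.mulVec v ∧
        v ⬝ᵥ AH.mulVec v ≤ (1 + δ) * (v ⬝ᵥ A.mulVec v)) ∧
    AH.PosDef ∧
    (∀ (ρ : ℝ) (v : Fin n → ℝ), v ≠ 0 → (AH⁻¹ * A).mulVec v = ρ • v →
        1 / (1 + δ) ≤ ρ ∧ ρ ≤ 1 / (1 - δ)) ∧
    (∀ (ρ₁ ρ₂ : ℝ) (v₁ v₂ : Fin n → ℝ), v₁ ≠ 0 → v₂ ≠ 0 →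
        (AH⁻¹ * A).mulVec v₁ = ρ₁ • v₁ → (AH⁻¹ * A).mulVec v₂ = ρ₂ • v₂ →
        ρ₁ / ρ₂ ≤ (1 + δ) / (1 - δ)) := by
  have hAs : A.IsSymm := by
    have := hA.isHermitian
    simpa [Matrix.IsHermitian, Matrix.IsSymm, conjTranspose_eq_transpose_of_trivial] using this
  have hpos : ∀ v : Fin n → ℝ, v ≠ 0 → 0 < v ⬝ᵥ A.mulVec v := by
    intro v hv
    simpa using hA.dotProduct_mulVec_pos hv
  have hnn : ∀ v : Fin n → ℝ, 0 ≤ v ⬝ᵥ A.mulVec v := by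
    intro v
    by_cases hv : v = 0
    · simp [hv]
    · exact (hpos v hv).le
  have hlam : 0 < lammax := by
    obtain ⟨v, hv, he⟩ := hmaxev
    have h1 := hpos v hv
    rw [he, dotProduct_smul, smul_eq_mul] at h1
    have h2 : 0 ≤ v ⬝ᵥ v := Finset.sum_nonneg fun i _ => mul_self_nonneg _
    by_contra hcon
    push Not at hcon
    nlinarith [mul_nonneg_of_nonpos_of_nonpos hcon (neg_nonpos.mpr h2)]
  have hδ0 : 0 ≤ δ := by
    rw [hδ]
    have : ∀ i, 0 ≤ ε i * lammax / μ i := fun i =>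
      div_nonneg (mul_nonneg (hε i) hlam.le) (hμpos i).le
    exact add_nonneg (this _) (mul_nonneg (by positivity) (Finset.sum_nonneg fun i _ => this _))
  have hEs : (A - AH).IsSymm := hAs.sub hAH
  have key : ∀ v : Fin n → ℝ, |v ⬝ᵥ (A - AH).mulVec v| ≤ δ * (v ⬝ᵥ A.mulVec v) := by
    intro v
    obtain ⟨c, hc, hv⟩ := hspan v
    have hort : ∀ i j, i ≠ j → c i ⬝ᵥ A.mulVec (c j) = 0 :=
      fun i j hij => horth i j hij _ (hc i) _ (hc j)
    set a : Fin (N + 1) → ℝ := fun i => c i ⬝ᵥ A.mulVec (c i) with ha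
    have ha0 : ∀ i, 0 ≤ a i := fun i => hnn _
    set Q := v ⬝ᵥ A.mulVec v with hQ
    have hQs : Q = ∑ i, a i := by
      have := aux_diag A c hort (fun _ => 1)
      simpa [← hv] using this
    have hQ0 : 0 ≤ Q := hnn v
    set u : Fin (N + 1) → Fin n → ℝ := fun i => ∑ j, auxT i j • c j with hu
    have hEv : v ⬝ᵥ (A - AH).mulVec v = ∑ i, c i ⬝ᵥ (A - AH).mulVec (u i) := by
      have h1 : v ⬝ᵥ (A - AH).mulVec v = ∑ i, ∑ j, c i ⬝ᵥ (A - AH).mulVec (c j) := by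
        rw [← aux_bilin, ← hv]
      rw [h1, aux_sum _ (fun i j => aux_symm _ hEs _ _)]
      refine Finset.sum_congr rfl fun i _ => ?_
      simp only [hu]
      rw [Matrix.mulVec_sum, dotProduct_sum]
      refine Finset.sum_congr rfl fun j _ => ?_
      rw [mulVec_smul, dotProduct_smul, smul_eq_mul]
    have hmem : ∀ i j, i ≤ j → c j ∈ (⨆ j, ⨆ (_ : i ≤ j), S j) := fun i j hij =>
      Submodule.mem_iSup_of_mem j (Submodule.mem_iSup_of_mem hij (hc j))
    have humem : ∀ i, u i ∈ (⨆ j, ⨆ (_ : i ≤ j), S j) := by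
      intro i
      refine Submodule.sum_mem _ fun j _ => ?_
      by_cases hij : i ≤ j
      · exact Submodule.smul_mem _ _ (hmem i j hij)
      · have : auxT i j = 0 := by
          unfold auxT
          rw [if_neg (fun h => hij h.le), if_neg (fun h => hij h.le)]
        rw [this, zero_smul]
        exact Submodule.zero_mem _
    have hqu : ∀ i, u i ⬝ᵥ A.mulVec (u i) = ∑ j, auxT i j ^ 2 * a j :=
      fun i => aux_diag A c hort (fun j => auxT i j)
    have hterm : ∀ i (K : ℝ), 0 ≤ K → a i * (u i ⬝ᵥ A.mulVec (u i)) ≤ (K * Q) ^ 2 →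
        |c i ⬝ᵥ (A - AH).mulVec (u i)| ≤ K * (ε i * lammax / μ i) * Q := by
      intro i K hK hab
      have h1 := aux_num (aux_enorm_nonneg (c i)) (aux_enorm_nonneg (u i)) (hμpos i) hK hQ0
        (hμ i _ (hmem i i le_rfl)) (hμ i _ (humem i)) hab
      rw [aux_symm _ hEs]
      calc |u i ⬝ᵥ (A - AH).mulVec (c i)|
          ≤ _root_.enorm (u i) * _root_.enorm ((A - AH).mulVec (c i)) := aux_cs _ _
        _ ≤ _root_.enorm (u i) * (ε i * lammax * _root_.enorm (c i)) :=
            mul_le_mul_of_nonneg_left (happrox i _ (hc i)) (aux_enorm_nonneg _)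
        _ = ε i * lammax * (_root_.enorm (c i) * _root_.enorm (u i)) := by ring
        _ ≤ ε i * lammax * (K * Q / μ i) :=
            mul_le_mul_of_nonneg_left h1 (mul_nonneg (hε i) hlam.le)
        _ = _ := by ring
    have haQ : ∀ i, a i ≤ Q := by
      intro i
      rw [hQs]
      exact Finset.single_le_sum (fun j _ => ha0 j) (Finset.mem_univ i)
    have hlast : |c (Fin.last N) ⬝ᵥ (A - AH).mulVec (u (Fin.last N))| ≤
        1 * (ε (Fin.last N) * lammax / μ (Fin.last N)) * Q := by
      apply hterm _ _ zero_le_one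
      have h1 : u (Fin.last N) ⬝ᵥ A.mulVec (u (Fin.last N)) ≤ Q := by
        rw [hqu, hQs]
        refine Finset.sum_le_sum fun j _ => ?_
        have hj := Fin.le_last j
        unfold auxT
        rw [if_neg hj.not_gt]
        have := ha0 j
        split_ifs
        · simp
        · simpa using this
      calc _ ≤ Q * Q := mul_le_mul (haQ _) h1 (hnn _) hQ0
        _ = _ := by ring
    have hgen : ∀ i, |c i ⬝ᵥ (A - AH).mulVec (u i)| ≤
        2 / Real.sqrt 3 * (ε i * lammax / μ i) * Q := by
      intro i
      apply hterm _ _ (by positivity)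
      have h1 : u i ⬝ᵥ A.mulVec (u i) ≤ 4 * Q - 3 * a i := by
        have h2 : 3 * a i = ∑ j, if i = j then 3 * a j else 0 := by simp
        rw [hqu, hQs, h2, Finset.mul_sum, ← Finset.sum_sub_distrib]
        refine Finset.sum_le_sum fun j _ => ?_
        have := ha0 j
        unfold auxT
        rcases lt_trichotomy i j with h | h | h
        · simp only [h, h.ne, if_true, if_false]; linarith
        · subst h; simp; linarith
        · simp only [h.not_gt, h.ne', if_false]; linarith
      have h3 : (2 / Real.sqrt 3 * Q) ^ 2 = 4 / 3 * Q ^ 2 := by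
        rw [mul_pow, div_pow, Real.sq_sqrt (by norm_num)]; norm_num
      rw [h3]
      have h4 := mul_le_mul_of_nonneg_left h1 (ha0 i)
      nlinarith [sq_nonneg (3 * a i - 2 * Q)]
    rw [hEv, hδ]
    refine (Finset.abs_sum_le_sum_abs _ _).trans ?_
    rw [Fin.sum_univ_castSucc]
    have h5 := Finset.sum_le_sum fun (i : Fin N) (_ : i ∈ Finset.univ) => hgen i.castSucc
    rw [← Finset.sum_mul, ← Finset.mul_sum] at h5
    linarith
  have main : ∀ v : Fin n → ℝ,
        (1 - δ) * (v ⬝ᵥ A.mulVec v) ≤ v ⬝ᵥ AH.mulVec v ∧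
        v ⬝ᵥ AH.mulVec v ≤ (1 + δ) * (v ⬝ᵥ A.mulVec v) := by
    intro v
    have h := abs_le.mp (key v)
    rw [sub_mulVec, dotProduct_sub] at h
    constructor <;> linarith [h.1, h.2]
  have hpd : AH.PosDef := by
    refine Matrix.PosDef.of_dotProduct_mulVec_pos ?_ ?_
    · simpa [Matrix.IsHermitian, conjTranspose_eq_transpose_of_trivial] using hAH.eq
    · intro v hv
      have := mul_pos (sub_pos.mpr hδ1) (hpos v hv)
      simpa using lt_of_lt_of_le this (main v).1
  have heig : ∀ (ρ : ℝ) (v : Fin n → ℝ), v ≠ 0 → (AH⁻¹ * A).mulVec v = ρ • v →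
        1 / (1 + δ) ≤ ρ ∧ ρ ≤ 1 / (1 - δ) := by
    intro ρ v hv he
    have hdet : IsUnit AH.det := hpd.det_pos.ne'.isUnit
    have h1 : A.mulVec v = ρ • AH.mulVec v := by
      rw [← mulVec_smul, ← he, mulVec_mulVec, ← Matrix.mul_assoc, Matrix.mul_nonsing_inv _ hdet,
        Matrix.one_mul]
    have hq := hpos v hv
    obtain ⟨h2, h3⟩ := main v
    have h4 : v ⬝ᵥ A.mulVec v = ρ * (v ⬝ᵥ AH.mulVec v) := by
      rw [h1, dotProduct_smul, smul_eq_mul]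
    have hd : 0 < 1 - δ := sub_pos.mpr hδ1
    have h5 : 0 < v ⬝ᵥ AH.mulVec v := lt_of_lt_of_le (mul_pos hd hq) h2
    have h6 : ρ = (v ⬝ᵥ A.mulVec v) / (v ⬝ᵥ AH.mulVec v) := by
      rw [eq_div_iff h5.ne', h4]
    rw [h6]
    constructor
    · rw [div_le_div_iff₀ (by linarith) h5]; linarith
    · rw [div_le_div_iff₀ h5 hd]; linarith
  refine ⟨main, hpd, heig, ?_⟩
  intro ρ₁ ρ₂ v₁ v₂ hv₁ hv₂ he₁ he₂
  have h1 := (heig ρ₁ v₁ hv₁ he₁).2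
  have h2 := (heig ρ₂ v₂ hv₂ he₂).1
  have hd : 0 < 1 - δ := sub_pos.mpr hδ1
  have hd' : 0 < 1 + δ := by linarith
  have hp : 0 < 1 / (1 + δ) := by positivity
  calc ρ₁ / ρ₂ ≤ (1 / (1 - δ)) / (1 / (1 + δ)) := 
        div_le_div₀ (by positivity) h1 hp h2
    _ = _ := by field_simp
end

section
/- Let A be an n×n real symmetric positive definite matrix with orthonormal eigenbasis e₁,…,e_n and corresponding eigenvalues λ₁ ≤ λ₂ ≤ … ≤ λ_n, and write λ_max := λ_n. Let A_H be an n×n real symmetric matrix with ‖(A − A_H)eᵢ‖ ≤ εᵢ·λ_max for each 1 ≤ i ≤ n, where εᵢ ≥ 0. Assume δ := (2/√3)·Σ_{i=1}^{n−1} εᵢ·λ_max/λᵢ + ε_n·λ_max/λ_n < 1. Then for every v ∈ ℝⁿ, (1 − δ)·vᵀAv ≤ vᵀA_H v ≤ (1 + δ)·vᵀAv; consequently every eigenvalue ρ of A_H⁻¹A satisfies 1/(1+δ) ≤ ρ ≤ 1/(1−δ) and κ(A_H⁻¹A) ≤ (1+δ)/(1−δ). -/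
open Matrix

theorem aux_term {m : ℕ} (f c lam : Fin m → ℝ) (η : ℝ) (i : Fin m)
    (hη : 0 ≤ η) (hf : ∑ j, f j ^ 2 ≤ η ^ 2) (hl : ∀ i, 0 < lam i)
    (hsort : ∀ i j, i ≤ j → lam i ≤ lam j) (k : ℝ) (hk : 0 ≤ k)
    (hkk : ∀ Y : ℝ, 0 ≤ Y → (Y = ∑ j, if i < j then c j ^ 2 else 0) →
      c i ^ 2 * (c i ^ 2 + 4 * Y) ≤ k ^ 2 * (c i ^ 2 + Y) ^ 2) :
    |∑ j, f j * (c i * c j * (if j = i then 1 else if i < j then 2 else 0))|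
      ≤ k * (η / lam i) * ∑ j, lam j * c j ^ 2 := by
  set Y : ℝ := ∑ j, if i < j then c j ^ 2 else 0 with hY
  have hY0 : 0 ≤ Y := Finset.sum_nonneg (fun j _ => by split_ifs <;> positivity)
  have h1 := Finset.sum_mul_sq_le_sq_mul_sq Finset.univ f
    (fun j => c i * c j * (if j = i then 1 else if i < j then 2 else 0))
  have hc : c i ^ 2 = ∑ j, if j = i then c j ^ 2 else 0 := by simp
  have h2 : ∑ j, (c i * c j * (if j = i then 1 else if i < j then 2 else 0)) ^ 2
      = c i ^ 2 * (c i ^ 2 + 4 * Y) := by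
    rw [mul_add]
    nth_rw 2 [hc]
    rw [hY, Finset.mul_sum, Finset.mul_sum, Finset.mul_sum, ← Finset.sum_add_distrib]
    refine Finset.sum_congr rfl fun j _ => ?_
    by_cases h : j = i
    · subst h; simp; ring
    · by_cases h' : i < j
      · simp [h, h']; ring
      · simp [h, h']
  have h3 : lam i * (c i ^ 2 + Y) ≤ ∑ j, lam j * c j ^ 2 := by
    rw [hc, hY, ← Finset.sum_add_distrib, Finset.mul_sum]
    refine Finset.sum_le_sum fun j _ => ?_
    by_cases h : j = i
    · subst h; simp
    · by_cases h' : i < j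
      · simp only [h, h', if_true, if_false, zero_add]
        exact mul_le_mul_of_nonneg_right (hsort i j h'.le) (sq_nonneg _)
      · simp only [h, h', if_false, zero_add, mul_zero]
        exact mul_nonneg (hl j).le (sq_nonneg _)
  rw [h2] at h1
  have h4 := hkk Y hY0 rfl
  have h5 : 0 ≤ c i ^ 2 * (c i ^ 2 + 4 * Y) := by positivity
  have h6 : |∑ j, f j * (c i * c j * (if j = i then 1 else if i < j then 2 else 0))|
      ≤ k * η * (c i ^ 2 + Y) := by
    apply abs_le_of_sq_le_sq _ (by positivity)
    calc _ ≤ _ := h1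
      _ ≤ η ^ 2 * (c i ^ 2 * (c i ^ 2 + 4 * Y)) := mul_le_mul_of_nonneg_right hf h5
      _ ≤ η ^ 2 * (k ^ 2 * (c i ^ 2 + Y) ^ 2) := mul_le_mul_of_nonneg_left h4 (sq_nonneg _)
      _ = _ := by ring
  refine h6.trans ?_
  have hli := hl i
  calc k * η * (c i ^ 2 + Y) = k * (η / lam i) * (lam i * (c i ^ 2 + Y)) := by
        field_simp
    _ ≤ _ := mul_le_mul_of_nonneg_left h3 (by positivity)

theorem aux_sum_s10 {m : ℕ} (F : Matrix (Fin m) (Fin m) ℝ) (hF : ∀ i j, F i j = F j i)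
    (c : Fin m → ℝ) :
    ∑ i, ∑ j, F i j * (c i * c j)
     = ∑ i, ∑ j, F i j * (c i * c j * (if j = i then 1 else if i < j then 2 else 0)) := by
  have h := Finset.sum_comm (s := Finset.univ) (t := Finset.univ)
    (f := fun i j => F i j * (c i * c j * (if j = i then 1 else if i < j then 2 else 0)))
  have h2 : 2 * ∑ i, ∑ j, F i j * (c i * c j)
     = ∑ i, ∑ j, F i j * (c i * c j * (if j = i then 1 else if i < j then 2 else 0))
     + ∑ i, ∑ j, F j i * (c j * c i * (if i = j then 1 else if j < i then 2 else 0)) := by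
    simp only [Finset.mul_sum, ← Finset.sum_add_distrib]
    refine Finset.sum_congr rfl fun i _ => Finset.sum_congr rfl fun j _ => ?_
    rw [hF j i]
    rcases lt_trichotomy i j with h | h | h
    · simp [h, h.ne, h.ne', h.not_gt]; ring
    · subst h; simp; ring
    · simp [h, h.ne, h.ne', h.not_gt]; ring
  linarith

theorem aux_form {n : ℕ} (F : Matrix (Fin (n+1)) (Fin (n+1)) ℝ) (hF : ∀ i j, F i j = F j i)
    (c lam η : Fin (n+1) → ℝ) (hη : ∀ i, 0 ≤ η i) (hf : ∀ i, ∑ j, F i j ^ 2 ≤ η i ^ 2)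
    (hl : ∀ i, 0 < lam i) (hsort : ∀ i j, i ≤ j → lam i ≤ lam j) :
    |∑ i, ∑ j, F i j * (c i * c j)| ≤
      (2 / Real.sqrt 3 * ∑ i : Fin n, η i.castSucc / lam i.castSucc
        + η (Fin.last n) / lam (Fin.last n)) * ∑ j, lam j * c j ^ 2 := by
  rw [aux_sum_s10 F hF c]
  refine (Finset.abs_sum_le_sum_abs _ _).trans ?_
  rw [Fin.sum_univ_castSucc, add_mul, Finset.mul_sum Finset.univ (fun i : Fin n => η i.castSucc / lam i.castSucc),
    Finset.sum_mul]
  refine add_le_add (Finset.sum_le_sum fun i _ => ?_) ?_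
  · refine aux_term (F i.castSucc) c lam (η i.castSucc) i.castSucc (hη _) (hf _) hl hsort _
      (by positivity) ?_
    intro Y hY _
    rw [div_pow, Real.sq_sqrt (by norm_num)]
    nlinarith [sq_nonneg (c i.castSucc ^ 2 - 2 * Y)]
  · have := aux_term (F (Fin.last n)) c lam (η (Fin.last n)) (Fin.last n) (hη _) (hf _) hl hsort 1
      zero_le_one ?_
    · simpa only [one_mul] using this
    intro Y hY h
    have : Y = 0 := by
      rw [h]
      refine Finset.sum_eq_zero fun j _ => ?_
      rw [if_neg (Fin.le_last j).not_gt]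
    subst this
    apply le_of_eq; ring

theorem aux_main {n : ℕ} (A E : Matrix (Fin (n+1)) (Fin (n+1)) ℝ) (hE : E.IsSymm)
    (e : Fin (n + 1) → Fin (n + 1) → ℝ) (lam η : Fin (n + 1) → ℝ)
    (heig : ∀ i, A.mulVec (e i) = lam i • e i)
    (hortho : ∀ i j, e i ⬝ᵥ e j = if i = j then (1 : ℝ) else 0)
    (hsort : ∀ i j : Fin (n + 1), i ≤ j → lam i ≤ lam j)
    (hl : ∀ i, 0 < lam i) (hη : ∀ i, 0 ≤ η i)
    (happrox : ∀ i, _root_.enorm (E.mulVec (e i)) ≤ η i) (v : Fin (n+1) → ℝ) :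
    |v ⬝ᵥ E.mulVec v| ≤
      (2 / Real.sqrt 3 * ∑ i : Fin n, η i.castSucc / lam i.castSucc
        + η (Fin.last n) / lam (Fin.last n)) * (v ⬝ᵥ A.mulVec v) := by
  let P : Matrix (Fin (n+1)) (Fin (n+1)) ℝ := Matrix.of e
  have hP : P * Pᵀ = 1 := by
    ext i j
    rw [Matrix.one_apply, ← hortho i j]
    rfl
  have hP' : Pᵀ * P = 1 := mul_eq_one_comm.mp hP
  have hv : v = Pᵀ *ᵥ (P *ᵥ v) := by rw [Matrix.mulVec_mulVec, hP', Matrix.one_mulVec]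
  have hA : A * Pᵀ = Pᵀ * Matrix.diagonal lam := by
    ext i j
    rw [Matrix.mul_diagonal]
    have := congrFun (heig j) i
    simp only [Pi.smul_apply, smul_eq_mul] at this
    rw [mul_comm (Pᵀ i j)]
    exact this
  set c := P *ᵥ v with hc
  have key : ∀ M : Matrix (Fin (n+1)) (Fin (n+1)) ℝ,
      v ⬝ᵥ M *ᵥ v = c ⬝ᵥ (P * (M * Pᵀ)) *ᵥ c := by
    intro M
    rw [← Matrix.mulVec_mulVec, ← Matrix.mulVec_mulVec, ← hv, hc, Matrix.dotProduct_mulVec,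
      Matrix.dotProduct_mulVec _ P, ← Matrix.mulVec_transpose P, ← hv, Matrix.dotProduct_mulVec]
  have hQ : v ⬝ᵥ A *ᵥ v = ∑ j, lam j * c j ^ 2 := by
    rw [key, hA, ← Matrix.mul_assoc, hP, Matrix.one_mul]
    simp only [dotProduct, Matrix.mulVec_diagonal]
    exact Finset.sum_congr rfl fun j _ => by ring
  set F := P * (E * Pᵀ) with hFdef
  have hFs : F.IsSymm := by
    unfold Matrix.IsSymm
    rw [hFdef, Matrix.transpose_mul, Matrix.transpose_mul, Matrix.transpose_transpose, hE.eq,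
      Matrix.mul_assoc]
  have hF : ∀ i j, F i j = F j i := fun i j => hFs.apply j i
  have hq : v ⬝ᵥ E *ᵥ v = ∑ i, ∑ j, F i j * (c i * c j) := by
    rw [key]
    simp only [dotProduct, Matrix.mulVec, Finset.mul_sum]
    exact Finset.sum_congr rfl fun i _ => Finset.sum_congr rfl fun j _ => by ring
  rw [hq, hQ]
  refine aux_form F hF c lam η hη (fun i => ?_) hl hsort
  have h1 : ∑ j, F i j ^ 2 = ∑ j, (E *ᵥ e i) j ^ 2 := by
    have h2 : ∀ j, F i j = (P *ᵥ (E *ᵥ e i)) j := by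
      intro j; rw [hF i j, Matrix.mulVec_mulVec, hFdef, ← Matrix.mul_assoc]; rfl
    have h3 : ∀ u : Fin (n+1) → ℝ, ∑ j, (P *ᵥ u) j ^ 2 = ∑ j, u j ^ 2 := by
      intro u
      have : (P *ᵥ u) ⬝ᵥ (P *ᵥ u) = u ⬝ᵥ u := by
        rw [Matrix.dotProduct_mulVec, ← Matrix.mulVec_transpose, Matrix.mulVec_mulVec, hP',
          Matrix.one_mulVec]
      simpa only [dotProduct, ← sq] using this
    simp only [h2, h3]
  rw [h1]
  exact (Real.sqrt_le_left (hη i)).mp (happrox i)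

/-- Per-eigenvector accuracies.  Let `A` be SPD of size `n+1` with
orthonormal eigenbasis `e₀,…,e_n` and sorted eigenvalues `λ₀ ≤ … ≤ λ_n = λ_max`.
If the symmetric matrix `A_H` satisfies `‖(A − A_H)eᵢ‖ ≤ εᵢ·λ_max` for each `i`
and `δ := (2/√3)·∑_{i<n} εᵢ·λ_max/λᵢ + ε_n·λ_max/λ_n < 1`, then
`(1 − δ)·vᵀAv ≤ vᵀA_Hv ≤ (1 + δ)·vᵀAv` for every `v`; consequently every
eigenvalue `ρ` of `A_H⁻¹A` satisfies `1/(1+δ) ≤ ρ ≤ 1/(1−δ)` and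
`κ(A_H⁻¹A) ≤ (1+δ)/(1−δ)`. -/
theorem preconditioner_per_eigenvector_accuracy {n : ℕ}
    (A AH : Matrix (Fin (n + 1)) (Fin (n + 1)) ℝ)
    (hA : A.PosDef) (hAH : AH.IsSymm)
    (e : Fin (n + 1) → Fin (n + 1) → ℝ) (lam : Fin (n + 1) → ℝ)
    (heig : ∀ i, A.mulVec (e i) = lam i • e i)
    (hortho : ∀ i j, e i ⬝ᵥ e j = if i = j then (1 : ℝ) else 0)
    (hsort : ∀ i j : Fin (n + 1), i ≤ j → lam i ≤ lam j)
    (ε : Fin (n + 1) → ℝ) (hε : ∀ i, 0 ≤ ε i)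
    (happrox : ∀ i, _root_.enorm ((A - AH).mulVec (e i)) ≤ ε i * lam (Fin.last n))
    (δ : ℝ)
    (hδ : δ = 2 / Real.sqrt 3
            * ∑ i : Fin n, ε i.castSucc * lam (Fin.last n) / lam i.castSucc
            + ε (Fin.last n) * lam (Fin.last n) / lam (Fin.last n))
    (hδ1 : δ < 1) :
    (∀ v : Fin (n + 1) → ℝ,
        (1 - δ) * (v ⬝ᵥ A.mulVec v) ≤ v ⬝ᵥ AH.mulVec v ∧
        v ⬝ᵥ AH.mulVec v ≤ (1 + δ) * (v ⬝ᵥ A.mulVec v)) ∧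
    (∀ (ρ : ℝ) (v : Fin (n + 1) → ℝ), v ≠ 0 → (AH⁻¹ * A).mulVec v = ρ • v →
        1 / (1 + δ) ≤ ρ ∧ ρ ≤ 1 / (1 - δ)) ∧
    (∀ (ρ₁ ρ₂ : ℝ) (v₁ v₂ : Fin (n + 1) → ℝ), v₁ ≠ 0 → v₂ ≠ 0 →
        (AH⁻¹ * A).mulVec v₁ = ρ₁ • v₁ → (AH⁻¹ * A).mulVec v₂ = ρ₂ • v₂ →
        ρ₁ / ρ₂ ≤ (1 + δ) / (1 - δ)) := by
  have hpos : ∀ v : Fin (n+1) → ℝ, v ≠ 0 → 0 < v ⬝ᵥ A *ᵥ v := by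
    intro v hv
    have := hA.dotProduct_mulVec_pos hv
    simpa using this
  have hl : ∀ i, 0 < lam i := by
    intro i
    have h1 := hortho i i
    have hne : e i ≠ 0 := by
      intro h; rw [h] at h1; simp at h1
    have := hpos _ hne
    rw [heig, dotProduct_smul, h1] at this
    simpa using this
  have hE : (A - AH).IsSymm := by
    have : A.IsSymm := by
      have := hA.isHermitian
      rw [Matrix.IsHermitian, Matrix.conjTranspose_eq_transpose_of_trivial] at this
      exact this
    exact this.sub hAH
  have hη : ∀ i, 0 ≤ ε i * lam (Fin.last n) := fun i => mul_nonneg (hε i) (hl _).le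
  have hδ0 : 0 ≤ δ := by
    rw [hδ]
    exact add_nonneg (mul_nonneg (by positivity)
      (Finset.sum_nonneg fun i _ => div_nonneg (hη _) (hl _).le)) (div_nonneg (hη _) (hl _).le)
  have part1 : ∀ v : Fin (n + 1) → ℝ,
        (1 - δ) * (v ⬝ᵥ A.mulVec v) ≤ v ⬝ᵥ AH.mulVec v ∧
        v ⬝ᵥ AH.mulVec v ≤ (1 + δ) * (v ⬝ᵥ A.mulVec v) := by
    intro v
    have h := aux_main A (A - AH) hE e lam (fun i => ε i * lam (Fin.last n)) heig hortho hsort hl hη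
      happrox v
    rw [← hδ, Matrix.sub_mulVec, dotProduct_sub, abs_le] at h
    constructor <;> linarith [h.1, h.2]
  have hd : 0 < 1 - δ := by linarith
  have hpos' : ∀ v : Fin (n+1) → ℝ, v ≠ 0 → 0 < v ⬝ᵥ AH *ᵥ v := fun v hv =>
    (mul_pos hd (hpos v hv)).trans_le (part1 v).1
  have hunit : IsUnit AH.det := by
    rw [isUnit_iff_ne_zero]
    intro h
    obtain ⟨v, hv, h0⟩ := Matrix.exists_mulVec_eq_zero_iff.mpr h
    have := hpos' v hv
    rw [h0] at this
    simp at this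
  have part2 : ∀ (ρ : ℝ) (v : Fin (n + 1) → ℝ), v ≠ 0 → (AH⁻¹ * A).mulVec v = ρ • v →
        1 / (1 + δ) ≤ ρ ∧ ρ ≤ 1 / (1 - δ) := by
    intro ρ v hv h
    have h1 : A *ᵥ v = ρ • (AH *ᵥ v) := by
      have := congrArg (fun u => AH *ᵥ u) h
      simp only [Matrix.mulVec_mulVec, Matrix.mulVec_smul] at this
      rwa [← Matrix.mul_assoc, Matrix.mul_nonsing_inv _ hunit, Matrix.one_mul] at this
    have h2 : v ⬝ᵥ A *ᵥ v = ρ * (v ⬝ᵥ AH *ᵥ v) := by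
      rw [h1, dotProduct_smul, smul_eq_mul]
    have hq := hpos v hv
    have hh := hpos' v hv
    obtain ⟨ha, hb⟩ := part1 v
    rw [h2] at ha hb
    constructor
    · rw [div_le_iff₀ (by linarith)]
      by_contra! hlt
      nlinarith
    · rw [le_div_iff₀ hd]
      by_contra! hlt
      nlinarith
  refine ⟨part1, part2, ?_⟩
  intro ρ₁ ρ₂ v₁ v₂ h1 h2 e1 e2
  have ha := (part2 ρ₁ v₁ h1 e1).2
  have hb := (part2 ρ₂ v₂ h2 e2).1
  have h0 : 0 < 1 / (1 + δ) := by positivity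
  calc ρ₁ / ρ₂ ≤ (1 / (1 - δ)) / (1 / (1 + δ)) := div_le_div₀ (by positivity) ha h0 hb
    _ = (1 + δ) / (1 - δ) := by field_simp
end

section
/- Let 𝒜₋ and 𝒜̃₋ be n×n real matrices, 𝒦 and 𝒦̃ be m×n real matrices, and ℳ and ℳ̃ be invertible m×m real matrices. Define 𝒜 := 𝒜₋ − 𝒦ᵀℳ⁻¹𝒦 and 𝒜̃ := 𝒜̃₋ − 𝒦̃ᵀℳ̃⁻¹𝒦̃, and the extended matrices 𝒜_E := [[𝒜₋, 𝒦ᵀ],[𝒦, ℳ]] and 𝒜̃_E := [[𝒜̃₋, 𝒦̃ᵀ],[𝒦̃, ℳ̃]]. Given φ ∈ ℝⁿ, let ξ := −ℳ⁻¹𝒦φ and φ_E := (φ; ξ). If 𝒜̃_E φ_E = 𝒜_E φ_E, then 𝒜̃φ = 𝒜φ. -/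
open Matrix

/-- Let `𝒜 := 𝒜₋ − 𝒦ᵀℳ⁻¹𝒦` and `𝒜̃ := 𝒜̃₋ − 𝒦̃ᵀℳ̃⁻¹𝒦̃` be the Schur
complements of the extended matrices `𝒜_E = [[𝒜₋,𝒦ᵀ],[𝒦,ℳ]]` and
`𝒜̃_E = [[𝒜̃₋,𝒦̃ᵀ],[𝒦̃,ℳ̃]]`. With `ξ := −ℳ⁻¹𝒦φ` and `φ_E = (φ; ξ)`, if
`𝒜̃_E φ_E = 𝒜_E φ_E` then `𝒜̃φ = 𝒜φ`. -/
theorem preserve_vector_during_extension {n m : ℕ}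
    (Am Amt : Matrix (Fin n) (Fin n) ℝ)
    (K Kt : Matrix (Fin m) (Fin n) ℝ)
    (M Mt : Matrix (Fin m) (Fin m) ℝ)
    (hM : IsUnit M.det) (hMt : IsUnit Mt.det)
    (φ : Fin n → ℝ) (ξ : Fin m → ℝ)
    (hξ : ξ = -(M⁻¹.mulVec (K.mulVec φ)))
    (htop : Amt.mulVec φ + Ktᵀ.mulVec ξ = Am.mulVec φ + Kᵀ.mulVec ξ)
    (hbot : Kt.mulVec φ + Mt.mulVec ξ = K.mulVec φ + M.mulVec ξ) :
    (Amt - Ktᵀ * Mt⁻¹ * Kt).mulVec φ = (Am - Kᵀ * M⁻¹ * K).mulVec φ := by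
  have h0 : K.mulVec φ + M.mulVec ξ = 0 := by
    rw [hξ, Matrix.mulVec_neg, Matrix.mulVec_mulVec, Matrix.mul_nonsing_inv M hM,
      Matrix.one_mulVec, add_neg_cancel]
  have h1 : Kt.mulVec φ = -(Mt.mulVec ξ) := eq_neg_of_add_eq_zero_left (hbot.trans h0)
  have h2 : K.mulVec φ = -(M.mulVec ξ) := eq_neg_of_add_eq_zero_left h0
  rw [Matrix.sub_mulVec, Matrix.sub_mulVec, ← Matrix.mulVec_mulVec, ← Matrix.mulVec_mulVec,
    ← Matrix.mulVec_mulVec, ← Matrix.mulVec_mulVec, h1, h2]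
  simp only [Matrix.mulVec_neg]
  rw [Matrix.mulVec_mulVec ξ Mt⁻¹ Mt, Matrix.mulVec_mulVec ξ M⁻¹ M,
    Matrix.nonsing_inv_mul M hM, Matrix.nonsing_inv_mul Mt hMt, Matrix.one_mulVec,
    sub_neg_eq_add, sub_neg_eq_add]
  exact htop
end

section
/- Let B be a real matrix and let U₁ˢ, U₁ʷ, U₂ be real matrices with orthonormal columns (of conformal sizes), and set P_s := U₁ˢ(U₁ˢ)ᵀ, P_w := U₁ʷ(U₁ʷ)ᵀ, Q := U₂U₂ᵀ. Define B̃ᵀ := Bᵀ − (I − Q)(I − P_s)Bᵀ(I − P_w). Let X_s and X_w be real matrices with ‖(I − P_s)X_s‖ ≤ ε₁‖X_s‖ and ‖(I − P_w)X_w‖ ≤ ε₁‖X_w‖, and assume ‖Bᵀ − B̃ᵀ‖ ≤ ε₂‖Bᵀ‖, where ε₁, ε₂ ≥ 0. Then ‖(Bᵀ − B̃ᵀ)X_w‖ ≤ ε₁·ε₂·‖Bᵀ‖·‖X_w‖; and if in addition (U₁ˢ)ᵀU₂ = 0, then also ‖(B − B̃)X_s‖ ≤ ε₁·ε₂·‖Bᵀ‖·‖X_s‖.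 -/
open Matrix

/-- Spectral (ℓ²-operator) norm of a real matrix. -/
noncomputable def specNorm {m n : Type*} [Fintype m] [Fintype n] [DecidableEq n]
    (M : Matrix m n ℝ) : ℝ :=
  ‖LinearMap.toContinuousLinearMap (Matrix.toEuclideanLin M)‖

theorem specNorm_mul_le' {l m n : ℕ} (A : Matrix (Fin l) (Fin m) ℝ) (C : Matrix (Fin m) (Fin n) ℝ) :
    specNorm (A * C) ≤ specNorm A * specNorm C :=
  Matrix.l2_opNorm_mul A C

theorem specNorm_transpose' {m n : ℕ} (A : Matrix (Fin m) (Fin n) ℝ) :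
    specNorm Aᵀ = specNorm A := by
  have h := Matrix.l2_opNorm_conjTranspose A
  rw [Matrix.conjTranspose_eq_transpose_of_trivial] at h
  exact h

theorem proj_compl {m p : ℕ} (U : Matrix (Fin m) (Fin p) ℝ) (h : Uᵀ * U = 1) :
    Uᵀ * (1 - U * Uᵀ) = 0 ∧ (1 - U * Uᵀ) * U = 0 := by
  constructor
  · rw [Matrix.mul_sub, ← Matrix.mul_assoc, h]; simp
  · rw [Matrix.sub_mul, Matrix.mul_assoc, h]; simp

theorem specNorm_key {l m n p : ℕ} (E : Matrix (Fin l) (Fin m) ℝ)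
    (U : Matrix (Fin m) (Fin p) ℝ) (X : Matrix (Fin m) (Fin n) ℝ) (hE : E * U = 0)
    (e₁ c : ℝ) (hc : specNorm E ≤ c)
    (hX : specNorm ((1 - U * Uᵀ) * X) ≤ e₁ * specNorm X) :
    specNorm (E * X) ≤ c * (e₁ * specNorm X) := by
  have h : E * X = E * ((1 - U * Uᵀ) * X) := by
    rw [← Matrix.mul_assoc, Matrix.mul_sub, ← Matrix.mul_assoc, hE]; simp
  rw [h]
  have h0 : 0 ≤ specNorm E := norm_nonneg _
  have h1 : 0 ≤ specNorm ((1 - U * Uᵀ) * X) := norm_nonneg _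
  exact (specNorm_mul_le' _ _).trans (mul_le_mul hc hX h1 (h0.trans hc))

/-- Second-order symmetric projection.  With orthonormal-column
matrices `U₁ˢ, U₁ʷ, U₂`, projections `P_s := U₁ˢ(U₁ˢ)ᵀ`, `P_w := U₁ʷ(U₁ʷ)ᵀ`,
`Q := U₂U₂ᵀ`, approximation `B̃ᵀ := Bᵀ − (I − Q)(I − P_s)Bᵀ(I − P_w)`, and
hypotheses `‖(I − P_s)X_s‖ ≤ ε₁‖X_s‖`, `‖(I − P_w)X_w‖ ≤ ε₁‖X_w‖`,
`‖Bᵀ − B̃ᵀ‖ ≤ ε₂‖Bᵀ‖`, one has `‖(Bᵀ − B̃ᵀ)X_w‖ ≤ ε₁ε₂‖Bᵀ‖‖X_w‖`; and if in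
addition `(U₁ˢ)ᵀU₂ = 0`, also `‖(B − B̃)X_s‖ ≤ ε₁ε₂‖Bᵀ‖‖X_s‖`. -/
theorem second_order_symmetric_projection {w s p₁ p₂ p₃ a b : ℕ}
    (B : Matrix (Fin w) (Fin s) ℝ)
    (U₁s : Matrix (Fin s) (Fin p₁) ℝ) (U₁w : Matrix (Fin w) (Fin p₂) ℝ)
    (U₂ : Matrix (Fin s) (Fin p₃) ℝ)
    (hU₁s : U₁sᵀ * U₁s = 1) (hU₁w : U₁wᵀ * U₁w = 1) (hU₂ : U₂ᵀ * U₂ = 1)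
    (Xs : Matrix (Fin s) (Fin a) ℝ) (Xw : Matrix (Fin w) (Fin b) ℝ)
    (ε₁ ε₂ : ℝ) (hε₁ : 0 ≤ ε₁) (hε₂ : 0 ≤ ε₂)
    (Bt : Matrix (Fin s) (Fin w) ℝ)
    (hBt : Bt = Bᵀ - (1 - U₂ * U₂ᵀ) * (1 - U₁s * U₁sᵀ) * Bᵀ * (1 - U₁w * U₁wᵀ))
    (hXs : specNorm ((1 - U₁s * U₁sᵀ) * Xs) ≤ ε₁ * specNorm Xs)
    (hXw : specNorm ((1 - U₁w * U₁wᵀ) * Xw) ≤ ε₁ * specNorm Xw)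
    (hB : specNorm (Bᵀ - Bt) ≤ ε₂ * specNorm Bᵀ) :
    specNorm ((Bᵀ - Bt) * Xw) ≤ ε₁ * ε₂ * specNorm Bᵀ * specNorm Xw ∧
    (U₁sᵀ * U₂ = 0 →
      specNorm ((B - Btᵀ) * Xs) ≤ ε₁ * ε₂ * specNorm Bᵀ * specNorm Xs) := by
  have hE : Bᵀ - Bt = (1 - U₂ * U₂ᵀ) * (1 - U₁s * U₁sᵀ) * Bᵀ * (1 - U₁w * U₁wᵀ) := by
    rw [hBt]; abel
  constructor
  · have h0 : (Bᵀ - Bt) * U₁w = 0 := by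
      rw [hE, Matrix.mul_assoc, (proj_compl U₁w hU₁w).2, Matrix.mul_zero]
    have := specNorm_key _ _ Xw h0 ε₁ _ hB hXw
    linarith
  · intro hU
    have h1 : U₁sᵀ * (Bᵀ - Bt) = 0 := by
      have h2 : U₁sᵀ * (1 - U₂ * U₂ᵀ) = U₁sᵀ := by
        rw [Matrix.mul_sub, ← Matrix.mul_assoc, hU]; simp
      rw [hE, ← Matrix.mul_assoc, ← Matrix.mul_assoc, ← Matrix.mul_assoc, h2,
        (proj_compl U₁s hU₁s).1]
      simp
    have h3 : B - Btᵀ = (Bᵀ - Bt)ᵀ := by simp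
    have h0 : (B - Btᵀ) * U₁s = 0 := by
      have := congrArg Matrix.transpose h1
      rw [Matrix.transpose_mul, ← h3] at this
      simpa using this
    have hB' : specNorm (B - Btᵀ) ≤ ε₂ * specNorm Bᵀ := by
      rw [h3, specNorm_transpose']; exact hB
    have := specNorm_key _ _ Xs h0 ε₁ _ hB' hXs
    linarith
end

section
/- Let B be a real matrix and let U₁, U₂ be real matrices with orthonormal columns (of conformal sizes); set P₁ := U₁U₁ᵀ and Q := U₂U₂ᵀ, and define B̃ᵀ := P₁Bᵀ + Q(I − P₁)Bᵀ, so that Bᵀ − B̃ᵀ = (I − Q)(I − P₁)Bᵀ. Let X_s and X_w be real matrices and write Y := [X_s, BᵀX_w] for the horizontal concatenation. Assume ‖(I − P₁)Y‖ ≤ ε₁‖Y‖ and ‖(I − Q)(I − P₁)Bᵀ‖ ≤ ε₂‖Bᵀ‖, where ε₁, ε₂ ≥ 0. Then: (i) ‖Bᵀ − B̃ᵀ‖ ≤ ε₂‖Bᵀ‖; (ii) ‖(Bᵀ − B̃ᵀ)X_w‖ ≤ min{ε₁‖Y‖, ε₂‖Bᵀ‖‖X_w‖}; and (iii) if in addition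 U₁ᵀU₂ = 0, then ‖(B − B̃)X_s‖ ≤ ε₁·ε₂·‖B‖·‖Y‖. -/
open Matrix

open Matrix.Norms.L2Operator in
theorem specNorm_eq_norm {m n : Type*} [Fintype m] [Fintype n] [DecidableEq n]
    (M : Matrix m n ℝ) : specNorm M = ‖M‖ := rfl

theorem specNorm_nn {m n : Type*} [Fintype m] [Fintype n] [DecidableEq n]
    (M : Matrix m n ℝ) : 0 ≤ specNorm M := norm_nonneg _

open Matrix.Norms.L2Operator in
theorem specNorm_mul_le {m n l : Type*} [Fintype m] [Fintype n] [DecidableEq n]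
    [Fintype l] [DecidableEq l]
    (M : Matrix m n ℝ) (N : Matrix n l ℝ) : specNorm (M * N) ≤ specNorm M * specNorm N := by
  simp only [specNorm_eq_norm]
  exact Matrix.l2_opNorm_mul M N

open Matrix.Norms.L2Operator in
theorem specNorm_tr {m n : Type*} [Fintype m] [Fintype n] [DecidableEq n] [DecidableEq m]
    (M : Matrix m n ℝ) : specNorm Mᵀ = specNorm M := by
  simp only [specNorm_eq_norm]
  rw [← Matrix.l2_opNorm_conjTranspose M, Matrix.conjTranspose_eq_transpose_of_trivial]

open Matrix.Norms.L2Operator in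
theorem specNorm_gram {m n : Type*} [Fintype m] [Fintype n] [DecidableEq n]
    (M : Matrix m n ℝ) : specNorm (Mᵀ * M) = specNorm M * specNorm M := by
  simp only [specNorm_eq_norm]
  rw [← Matrix.l2_opNorm_conjTranspose_mul_self M, Matrix.conjTranspose_eq_transpose_of_trivial]

theorem specNorm_proj {n : Type*} [Fintype n] [DecidableEq n]
    (M : Matrix n n ℝ) (h : Mᵀ * M = M) : specNorm M ≤ 1 := by
  have h1 := specNorm_gram M
  rw [h] at h1
  nlinarith [specNorm_nn M]

theorem specNorm_isom {m n : Type*} [Fintype m] [Fintype n] [DecidableEq n]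
    (M : Matrix m n ℝ) (h : Mᵀ * M = 1) : specNorm M ≤ 1 := by
  have h1 := specNorm_gram M
  rw [h] at h1
  have h2 := specNorm_proj (1 : Matrix n n ℝ) (by simp)
  nlinarith [specNorm_nn M]

theorem specNorm_left {m a b : Type*} [Fintype m] [Fintype a] [Fintype b] [DecidableEq a]
    [DecidableEq b] (M : Matrix m a ℝ) (N : Matrix m b ℝ) :
    specNorm M ≤ specNorm (Matrix.fromCols M N) := by
  have h : M = Matrix.fromCols M N * Matrix.fromRows (1 : Matrix a a ℝ) (0 : Matrix b a ℝ) := by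
    simp [Matrix.fromCols_mul_fromRows]
  have h1 := specNorm_isom (Matrix.fromRows (1 : Matrix a a ℝ) (0 : Matrix b a ℝ))
    (by simp [Matrix.transpose_fromRows, Matrix.fromCols_mul_fromRows])
  have h2 := specNorm_mul_le (Matrix.fromCols M N)
    (Matrix.fromRows (1 : Matrix a a ℝ) (0 : Matrix b a ℝ))
  rw [← h] at h2
  nlinarith [specNorm_nn (Matrix.fromCols M N)]

theorem specNorm_right {m a b : Type*} [Fintype m] [Fintype a] [Fintype b] [DecidableEq a]
    [DecidableEq b] (M : Matrix m a ℝ) (N : Matrix m b ℝ) :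
    specNorm N ≤ specNorm (Matrix.fromCols M N) := by
  have h : N = Matrix.fromCols M N * Matrix.fromRows (0 : Matrix a b ℝ) (1 : Matrix b b ℝ) := by
    simp [Matrix.fromCols_mul_fromRows]
  have h1 := specNorm_isom (Matrix.fromRows (0 : Matrix a b ℝ) (1 : Matrix b b ℝ))
    (by simp [Matrix.transpose_fromRows, Matrix.fromCols_mul_fromRows])
  have h2 := specNorm_mul_le (Matrix.fromCols M N)
    (Matrix.fromRows (0 : Matrix a b ℝ) (1 : Matrix b b ℝ))
  rw [← h] at h2
  nlinarith [specNorm_nn (Matrix.fromCols M N)]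

/-- First-order one-sided projection.  With orthonormal-column
matrices `U₁, U₂`, projections `P₁ := U₁U₁ᵀ`, `Q := U₂U₂ᵀ`, approximation
`B̃ᵀ := P₁Bᵀ + Q(I − P₁)Bᵀ` (so `Bᵀ − B̃ᵀ = (I − Q)(I − P₁)Bᵀ`), concatenation
`Y := [X_s, BᵀX_w]`, and hypotheses `‖(I − P₁)Y‖ ≤ ε₁‖Y‖` and
`‖(I − Q)(I − P₁)Bᵀ‖ ≤ ε₂‖Bᵀ‖`, one has (i) `‖Bᵀ − B̃ᵀ‖ ≤ ε₂‖Bᵀ‖`;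
(ii) `‖(Bᵀ − B̃ᵀ)X_w‖ ≤ min{ε₁‖Y‖, ε₂‖Bᵀ‖‖X_w‖}`; and (iii) if `U₁ᵀU₂ = 0`, then
`‖(B − B̃)X_s‖ ≤ ε₁ε₂‖B‖‖Y‖`. -/
theorem first_order_one_sided_projection {w s p₁ p₂ a b : ℕ}
    (B : Matrix (Fin w) (Fin s) ℝ)
    (U₁ : Matrix (Fin s) (Fin p₁) ℝ) (U₂ : Matrix (Fin s) (Fin p₂) ℝ)
    (hU₁ : U₁ᵀ * U₁ = 1) (hU₂ : U₂ᵀ * U₂ = 1)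
    (Xs : Matrix (Fin s) (Fin a) ℝ) (Xw : Matrix (Fin w) (Fin b) ℝ)
    (ε₁ ε₂ : ℝ) (hε₁ : 0 ≤ ε₁) (hε₂ : 0 ≤ ε₂)
    (Bt : Matrix (Fin s) (Fin w) ℝ)
    (hBt : Bt = U₁ * U₁ᵀ * Bᵀ + U₂ * U₂ᵀ * (1 - U₁ * U₁ᵀ) * Bᵀ)
    (Y : Matrix (Fin s) (Fin a ⊕ Fin b) ℝ)
    (hY : Y = Matrix.fromCols Xs (Bᵀ * Xw))
    (h₁ : specNorm ((1 - U₁ * U₁ᵀ) * Y) ≤ ε₁ * specNorm Y)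
    (h₂ : specNorm ((1 - U₂ * U₂ᵀ) * (1 - U₁ * U₁ᵀ) * Bᵀ) ≤ ε₂ * specNorm Bᵀ) :
    specNorm (Bᵀ - Bt) ≤ ε₂ * specNorm Bᵀ ∧
    specNorm ((Bᵀ - Bt) * Xw) ≤ min (ε₁ * specNorm Y) (ε₂ * specNorm Bᵀ * specNorm Xw) ∧
    (U₁ᵀ * U₂ = 0 →
      specNorm ((B - Btᵀ) * Xs) ≤ ε₁ * ε₂ * specNorm B * specNorm Y) := by
  have hE : Bᵀ - Bt = (1 - U₂ * U₂ᵀ) * (1 - U₁ * U₁ᵀ) * Bᵀ := by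
    rw [hBt]
    simp only [Matrix.sub_mul, Matrix.mul_sub, Matrix.one_mul, Matrix.mul_one]
    abel
  have hQQ : (U₂ * U₂ᵀ) * (U₂ * U₂ᵀ) = U₂ * U₂ᵀ := by
    rw [Matrix.mul_assoc, ← Matrix.mul_assoc U₂ᵀ, hU₂, Matrix.one_mul]
  have hPP : (U₁ * U₁ᵀ) * (U₁ * U₁ᵀ) = U₁ * U₁ᵀ := by
    rw [Matrix.mul_assoc, ← Matrix.mul_assoc U₁ᵀ, hU₁, Matrix.one_mul]
  have hQT : (U₂ * U₂ᵀ)ᵀ = U₂ * U₂ᵀ := by simp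
  have hPT : (U₁ * U₁ᵀ)ᵀ = U₁ * U₁ᵀ := by simp
  have hY' : (1 - U₁ * U₁ᵀ) * Y
      = Matrix.fromCols ((1 - U₁ * U₁ᵀ) * Xs) ((1 - U₁ * U₁ᵀ) * (Bᵀ * Xw)) := by
    rw [hY, Matrix.mul_fromCols]
  rw [hY'] at h₁
  have hL := (specNorm_left ((1 - U₁ * U₁ᵀ) * Xs) ((1 - U₁ * U₁ᵀ) * (Bᵀ * Xw))).trans h₁
  have hR := (specNorm_right ((1 - U₁ * U₁ᵀ) * Xs) ((1 - U₁ * U₁ᵀ) * (Bᵀ * Xw))).trans h₁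
  rw [← hE] at h₂
  refine ⟨h₂, le_min ?_ ?_, ?_⟩
  · have hp : specNorm (1 - U₂ * U₂ᵀ) ≤ 1 := by
      apply specNorm_proj
      rw [Matrix.transpose_sub, Matrix.transpose_one, hQT, Matrix.sub_mul, Matrix.mul_sub,
        Matrix.mul_sub, hQQ]
      simp
    have he : (Bᵀ - Bt) * Xw = (1 - U₂ * U₂ᵀ) * ((1 - U₁ * U₁ᵀ) * (Bᵀ * Xw)) := by
      rw [hE]; simp only [Matrix.mul_assoc]
    rw [he]
    refine (specNorm_mul_le _ _).trans ?_
    nlinarith [specNorm_nn ((1 - U₁ * U₁ᵀ) * (Bᵀ * Xw))]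
  · exact (specNorm_mul_le _ _).trans (mul_le_mul_of_nonneg_right h₂ (specNorm_nn _))
  · intro h0
    have hPQ : (U₁ * U₁ᵀ) * (U₂ * U₂ᵀ) = 0 := by
      rw [Matrix.mul_assoc, ← Matrix.mul_assoc U₁ᵀ, h0]; simp
    have hPE : (1 - U₁ * U₁ᵀ) * (Bᵀ - Bt) = Bᵀ - Bt := by
      rw [hE, ← Matrix.mul_assoc, ← Matrix.mul_assoc]
      congr 1
      generalize U₁ * U₁ᵀ = P at *
      generalize U₂ * U₂ᵀ = Q at *
      have : (1 - P) * (1 - Q) * (1 - P) - (1 - Q) * (1 - P)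
        = (P * P - P) + P * Q - P * Q * P := by noncomm_ring
      rw [hPP, hPQ] at this
      simpa [sub_eq_zero] using this
    have hT : B - Btᵀ = (Bᵀ - Bt)ᵀ := by simp
    have hET : B - Btᵀ = (Bᵀ - Bt)ᵀ * (1 - U₁ * U₁ᵀ) := by
      rw [hT]
      conv_lhs => rw [← hPE]
      rw [Matrix.transpose_mul, Matrix.transpose_sub 1, Matrix.transpose_one, hPT]
    rw [hET, Matrix.mul_assoc]
    refine (specNorm_mul_le _ _).trans ?_
    rw [specNorm_tr]
    rw [specNorm_tr B] at h₂
    calc _ ≤ (ε₂ * specNorm B) * (ε₁ * specNorm Y) :=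
          mul_le_mul h₂ hL (specNorm_nn _) (mul_nonneg hε₂ (specNorm_nn _))
      _ = _ := by ring
end
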